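/- arXiv:0711.0071 — 2 statements merged into one kernel-verified Lean document; each statement's English description precedes it below -/
import Mathlib

section
/- For μ• ∈ 𝒱, the pseudo-Weyl polytope P(μ•) := {h ∈ V : h ≥_w μ_w for all w ∈ W} coincides with P(M•) := {h ∈ V : (w·Λ_i)(h) ≥ M_{w·Λ_i} for all w ∈ W and i ∈ I}, where M_{w·Λ_i} = (w·Λ_i)(μ_w). -/
namespace MV

/-- The action of a permutation `w` on `ℝ^N`: `(w·x)_k = x_{w⁻¹(k)}`. -/
def act (ℓ : ℕ) (w : Equiv.Perm (Fin (ℓ+1))) (x : Fin (ℓ+1) → ℝ) : Fin (ℓ+1) → ℝ :=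
  fun k => x (w⁻¹ k)

/-- The subspace `V = {x ∈ ℝ^N : Σ x_k = 0}`. -/
def Vsub (ℓ : ℕ) : Set (Fin (ℓ+1) → ℝ) := {x | ∑ k, x k = 0}

/-- The simple coroot `h_i = e_i - e_{i+1}` (here `i : Fin ℓ` encodes the 1-based index `i+1`). -/
def coroot (ℓ : ℕ) (i : Fin ℓ) : Fin (ℓ+1) → ℝ :=
  fun k => (if (k : ℕ) = (i : ℕ) then 1 else 0) - (if (k : ℕ) = (i : ℕ) + 1 then 1 else 0)

/-- The cone `Σ_{j∈I} ℝ_{≥0} h_j`. -/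
def corootCone (ℓ : ℕ) : Set (Fin (ℓ+1) → ℝ) :=
  {x | ∃ c : Fin ℓ → ℝ, (∀ j, 0 ≤ c j) ∧ x = ∑ j, c j • coroot ℓ j}

/-- The partial order `h ≥_w h'`. -/
def geOrd (ℓ : ℕ) (w : Equiv.Perm (Fin (ℓ+1))) (h h' : Fin (ℓ+1) → ℝ) : Prop :=
  act ℓ w⁻¹ (h - h') ∈ corootCone ℓ

/-- The simple reflection `s_i`, the transposition of (1-based) `i` and `i+1`. -/
def simpleRefl (ℓ : ℕ) (i : Fin ℓ) : Equiv.Perm (Fin (ℓ+1)) :=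
  Equiv.swap i.castSucc i.succ

/-- The longest element `w₀ : k ↦ N+1-k`. -/
def w0 (ℓ : ℕ) : Equiv.Perm (Fin (ℓ+1)) := Fin.revPerm

/-- The chamber weight functional `w·Λ_i : x ↦ x_{w(1)} + ⋯ + x_{w(i)}`. -/
def chamberWt (ℓ : ℕ) (w : Equiv.Perm (Fin (ℓ+1))) (i : Fin ℓ) (x : Fin (ℓ+1) → ℝ) : ℝ :=
  ∑ k ∈ Finset.univ.filter (fun k : Fin (ℓ+1) => (k : ℕ) ≤ (i : ℕ)), x (w k)

/-- The set `𝒱` of GGMS data. -/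
def calV (ℓ : ℕ) : Set (Equiv.Perm (Fin (ℓ+1)) → Fin (ℓ+1) → ℝ) :=
  {μ | (∀ w, μ w ∈ Vsub ℓ) ∧ (∀ w w', geOrd ℓ w (μ w') (μ w)) ∧ μ (w0 ℓ) = 0}

/-- The Cartan matrix of type `A_ℓ`. -/
def cartan (ℓ : ℕ) (i j : Fin ℓ) : ℝ :=
  if i = j then 2 else if (i : ℕ) + 1 = (j : ℕ) ∨ (j : ℕ) + 1 = (i : ℕ) then -1 else 0

/-- The linear involution `J : (Jx)_k = -x_{N+1-k}`. -/
def Jmap (ℓ : ℕ) (x : Fin (ℓ+1) → ℝ) : Fin (ℓ+1) → ℝ := fun k => - x k.rev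

/-- Nat-indexed (0-based) simple coroot, used for the folded coroots. -/
def corootN (ℓ : ℕ) (j : ℕ) : Fin (ℓ+1) → ℝ :=
  fun k => (if (k : ℕ) = j then 1 else 0) - (if (k : ℕ) = j + 1 then 1 else 0)

/-- The folded simple coroot `h_j^ω` (here `j : Fin n` encodes the 1-based index `j+1`):
`h_j^ω = h_j + h_{ℓ+1-j}` for `1 ≤ j ≤ n-1`, `h_n^ω = h_n` if `ℓ = 2n-1`, and
`h_n^ω = 2(h_n + h_{n+1})` if `ℓ = 2n`. -/
def fcoroot (ℓ n : ℕ) (j : Fin n) : Fin (ℓ+1) → ℝ :=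
  if (j : ℕ) + 1 < n then corootN ℓ j + corootN ℓ (ℓ - 1 - j)
  else if ℓ = 2 * n - 1 then corootN ℓ j
  else (2 : ℝ) • (corootN ℓ j + corootN ℓ ((j : ℕ) + 1))

/-- The folded coroot cone `Σ_{j=1}^{n} ℝ_{≥0} h_j^ω`. -/
def fcone (ℓ n : ℕ) : Set (Fin (ℓ+1) → ℝ) :=
  {x | ∃ c : Fin n → ℝ, (∀ j, 0 ≤ c j) ∧ x = ∑ j, c j • fcoroot ℓ n j}


/-- The simple transposition `s_{a+1}` (0-based `a`) in the symmetric group of `{1,…,m+1}`. -/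
def swN (m a : ℕ) : Equiv.Perm (Fin (m+1)) :=
  if h : a + 1 ≤ m then Equiv.swap ⟨a, by omega⟩ ⟨a + 1, by omega⟩ else 1

end MV

open MV

/-!
Everything happens one chamber at a time. Abel summation of `x = ∑ x_k e_k` gives
`x = (∑ x_k) e_N + ∑ Λ_j(x) h_j`, so on `V` the fundamental weights are the coordinates
dual to the simple coroots, and the coroot cone is the part of `V` where all of them are
nonnegative. Transported by `w`, the order `≥_w` is the simultaneous comparison of the chamber
weights `w·Λ_i`.
-/

namespace MV

open Finset

variable {ℓ : ℕ}

theorem sum_smul_eq_sum_Iic_smul_sub {R M : Type*} [Ring R] [AddCommGroup M] [Module R M] {n : ℕ}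
    (a : Fin (n + 1) → R) (v : Fin (n + 1) → M) :
    ∑ k, a k • v k = (∑ k, a k) • v (Fin.last n) +
      ∑ j : Fin n, (∑ k ∈ Iic j.castSucc, a k) • (v j.castSucc - v j.succ) := by
  induction n with
  | zero => simp
  | succ n ih =>
    have sum_Iic_last :
        ∑ k ∈ Iic (Fin.last n).castSucc, a k = ∑ k : Fin (n + 1), a k.castSucc := by
      rw [Fin.sum_Iic_castSucc, ← Fin.top_eq_last, Iic_top]
    rw [Fin.sum_univ_castSucc, ih (fun k => a k.castSucc) (fun k => v k.castSucc),
      Fin.sum_univ_castSucc a, Fin.sum_univ_castSucc (fun j : Fin (n + 1) => _ • (_ - _)),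
      sum_Iic_last]
    simp only [Fin.sum_Iic_castSucc, Fin.succ_last, Fin.succ_castSucc, add_smul, smul_sub]
    abel

/-- The fundamental weight `Λ_i`, that is `chamberWt ℓ 1 i` as a linear functional. As for `coroot`,
the index `i : Fin ℓ` encodes the 1-based index `i + 1`. -/
def fundamentalWt (i : Fin ℓ) : (Fin (ℓ + 1) → ℝ) →ₗ[ℝ] ℝ :=
  ∑ k ∈ Iic i.castSucc, LinearMap.proj k

theorem fundamentalWt_apply (i : Fin ℓ) (x : Fin (ℓ + 1) → ℝ) :
    fundamentalWt i x = ∑ k ∈ Iic i.castSucc, x k := by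
  simp [fundamentalWt]

theorem coroot_eq_single_sub_single (j : Fin ℓ) :
    coroot ℓ j = Pi.single j.castSucc 1 - Pi.single j.succ 1 := by
  ext k
  simp [coroot, Pi.single_apply, Fin.ext_iff]

theorem sum_coroot (j : Fin ℓ) : ∑ k, coroot ℓ j k = 0 := by
  simp [coroot_eq_single_sub_single]

theorem fundamentalWt_coroot (i j : Fin ℓ) :
    fundamentalWt i (coroot ℓ j) = if j = i then 1 else 0 := by
  simp only [fundamentalWt_apply, coroot_eq_single_sub_single, Pi.sub_apply, sum_sub_distrib,
    sum_pi_single', mem_Iic, Fin.castSucc_le_castSucc_iff, Fin.succ_le_castSucc_iff]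
  grind

theorem fundamentalWt_sum_smul_coroot (i : Fin ℓ) (c : Fin ℓ → ℝ) :
    fundamentalWt i (∑ j, c j • coroot ℓ j) = c i := by
  simp [fundamentalWt_coroot]

theorem sum_fundamentalWt_smul_coroot {x : Fin (ℓ + 1) → ℝ} (hx : x ∈ Vsub ℓ) :
    ∑ j, fundamentalWt j x • coroot ℓ j = x := by
  have sum_eq_zero : ∑ k, x k = 0 := hx
  have abel_summation := sum_smul_eq_sum_Iic_smul_sub x fun k => Pi.single (M := fun _ => ℝ) k 1
  simpa [← coroot_eq_single_sub_single, ← fundamentalWt_apply, sum_eq_zero,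
    ← pi_eq_sum_univ'] using abel_summation.symm

theorem corootCone_subset_Vsub : corootCone ℓ ⊆ Vsub ℓ := by
  rintro _ ⟨c, -, rfl⟩
  change ∑ k, (∑ j, c j • coroot ℓ j) k = 0
  simp only [Finset.sum_apply, Pi.smul_apply, smul_eq_mul]
  rw [sum_comm]
  simp [← mul_sum, sum_coroot]

theorem mem_corootCone_iff {x : Fin (ℓ + 1) → ℝ} :
    x ∈ corootCone ℓ ↔ x ∈ Vsub ℓ ∧ ∀ i, 0 ≤ fundamentalWt i x := by
  refine ⟨fun hx => ⟨corootCone_subset_Vsub hx, fun i => ?_⟩, fun ⟨hxV, hx⟩ =>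
    ⟨fun j => fundamentalWt j x, hx, (sum_fundamentalWt_smul_coroot hxV).symm⟩⟩
  obtain ⟨c, hc, rfl⟩ := hx
  simpa only [fundamentalWt_sum_smul_coroot] using hc i

theorem act_mem_Vsub_iff {w : Equiv.Perm (Fin (ℓ + 1))} {x : Fin (ℓ + 1) → ℝ} :
    act ℓ w x ∈ Vsub ℓ ↔ x ∈ Vsub ℓ := by
  change ∑ k, x (w⁻¹ k) = 0 ↔ ∑ k, x k = 0
  rw [Equiv.sum_comp w⁻¹ x]

theorem sub_mem_Vsub {x y : Fin (ℓ + 1) → ℝ} (hx : x ∈ Vsub ℓ) (hy : y ∈ Vsub ℓ) :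
    x - y ∈ Vsub ℓ := by
  simp_all [Vsub]

theorem chamberWt_eq_fundamentalWt_act_inv (w : Equiv.Perm (Fin (ℓ + 1))) (i : Fin ℓ)
    (x : Fin (ℓ + 1) → ℝ) : chamberWt ℓ w i x = fundamentalWt i (act ℓ w⁻¹ x) := by
  have filter_eq : univ.filter (fun k : Fin (ℓ + 1) => (k : ℕ) ≤ i) = Iic i.castSucc := by
    ext k
    simp [Fin.le_def]
  simp [chamberWt, fundamentalWt_apply, act, filter_eq]

theorem chamberWt_sub (w : Equiv.Perm (Fin (ℓ + 1))) (i : Fin ℓ) (x y : Fin (ℓ + 1) → ℝ) :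
    chamberWt ℓ w i (x - y) = chamberWt ℓ w i x - chamberWt ℓ w i y := by
  simp [chamberWt]

theorem geOrd_iff_chamberWt_le {w : Equiv.Perm (Fin (ℓ + 1))} {x y : Fin (ℓ + 1) → ℝ} :
    geOrd ℓ w x y ↔ x - y ∈ Vsub ℓ ∧ ∀ i, chamberWt ℓ w i y ≤ chamberWt ℓ w i x := by
  simp only [geOrd, mem_corootCone_iff, act_mem_Vsub_iff, ← chamberWt_eq_fundamentalWt_act_inv,
    chamberWt_sub, sub_nonneg]

end MV

theorem stmt5_general (ℓ : ℕ) (μ : Equiv.Perm (Fin (ℓ + 1)) → Fin (ℓ + 1) → ℝ)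
    (hμ : ∀ w, μ w ∈ Vsub ℓ) :
    {h | h ∈ Vsub ℓ ∧ ∀ w, geOrd ℓ w h (μ w)} =
      {h | h ∈ Vsub ℓ ∧ ∀ (w : Equiv.Perm (Fin (ℓ + 1))) (i : Fin ℓ),
        chamberWt ℓ w i (μ w) ≤ chamberWt ℓ w i h} := by
  ext h
  refine and_congr_right fun hh => forall_congr' fun w => ?_
  rw [geOrd_iff_chamberWt_le, and_iff_right (sub_mem_Vsub hh (hμ w))]

/-- the pseudo-Weyl polytope `P(μ•)` coincides with the polytope `P(M•)`
cut out by the inequalities `(w·Λ_i)(h) ≥ M_{w·Λ_i}`. -/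
theorem stmt5 (ℓ : ℕ) (hℓ : 3 ≤ ℓ)
    (μ : Equiv.Perm (Fin (ℓ+1)) → Fin (ℓ+1) → ℝ) (hμ : μ ∈ calV ℓ) :
    {h | h ∈ Vsub ℓ ∧ ∀ w, geOrd ℓ w h (μ w)}
    = {h | h ∈ Vsub ℓ ∧ ∀ (w : Equiv.Perm (Fin (ℓ+1))) (i : Fin ℓ),
        chamberWt ℓ w i (μ w) ≤ chamberWt ℓ w i h} :=
  stmt5_general ℓ μ hμ.1
end

section
/- Assume ℓ = 2n−1 or ℓ = 2n with n ≥ 2, and let 1 ≤ j ≤ n−1. Let c ∈ ℝ and define the affine reflections σ, τ : V → V by σ(h) = s_j·h + c h_j and τ(h) = s_{ℓ+1−j}·h + c h_{ℓ+1−j}. Then for every x ∈ V with Jx = x, one has σ(τ(x)) − x = (c − (x_j − x_{j+1})) · (h_j + h_{ℓ+1−j}). -/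
open MV

namespace MV

section AffineReflection

variable {R M : Type*} [CommRing R] [AddCommGroup M] [Module R M]

/-- The map `v ↦ v - f(v) h + c h`, used for `σ` and `τ`. It is the affine reflection in the
hyperplane `f = c` when `f h = 2`; as for `Module.preReflection`, this normalization is left out of
the definition. -/
def affinePreReflection (h : M) (f : Module.Dual R M) (c : R) (v : M) : M :=
  Module.preReflection h f v + c • h

theorem affinePreReflection_eq_add_smul (h : M) (f : Module.Dual R M) (c : R) (v : M) :
    affinePreReflection h f c v = v + (c - f v) • h := by
  rw [affinePreReflection, Module.preReflection_apply]
  module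

theorem affinePreReflection_affinePreReflection_sub_self {h k : M} {f g : Module.Dual R M}
    (hfk : f k = 0) (c d : R) (v : M) :
    affinePreReflection h f c (affinePreReflection k g d v) - v
      = (c - f v) • h + (d - g v) • k := by
  have f_invariant : f (affinePreReflection k g d v) = f v := by
    rw [affinePreReflection_eq_add_smul, map_add, map_smul, hfk, smul_zero, add_zero]
  rw [affinePreReflection_eq_add_smul h, f_invariant, affinePreReflection_eq_add_smul k]
  abel

end AffineReflection

theorem comp_swap_eq_sub_smul_single {ι R : Type*} [DecidableEq ι] [Ring R] (a b : ι) (x : ι → R) :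
    x ∘ Equiv.swap a b = x - (x a - x b) • (Pi.single a 1 - Pi.single b 1) := by
  ext k
  rcases eq_or_ne k a with rfl | hka
  · rcases eq_or_ne k b with rfl | hkb <;> simp [*]
  · rcases eq_or_ne k b with rfl | hkb
    · simp [hka]
    · simp [Equiv.swap_apply_of_ne_of_ne hka hkb, hka, hkb]

section TypeA

variable {ℓ : ℕ}

/-- The simple root `α_i : x ↦ x_i - x_{i+1}`, as a functional on all of `ℝ^N` (here `i : Fin ℓ`
encodes the 1-based index `i + 1`). -/
def simpleRoot (i : Fin ℓ) : Module.Dual ℝ (Fin (ℓ + 1) → ℝ) :=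
  LinearMap.proj (R := ℝ) (φ := fun _ => ℝ) i.castSucc - LinearMap.proj i.succ

theorem simpleRoot_apply (i : Fin ℓ) (x : Fin (ℓ + 1) → ℝ) :
    simpleRoot i x = x i.castSucc - x i.succ :=
  rfl

theorem coroot_eq_single_sub_single_s18 (i : Fin ℓ) :
    coroot ℓ i = Pi.single i.castSucc 1 - Pi.single i.succ 1 := by
  ext k
  simp [coroot, Pi.single_apply, Fin.ext_iff]

theorem act_simpleRefl_eq_preReflection (i : Fin ℓ) (x : Fin (ℓ + 1) → ℝ) :
    act ℓ (simpleRefl ℓ i) x = Module.preReflection (coroot ℓ i) (simpleRoot i) x := by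
  rw [Module.preReflection_apply, simpleRoot_apply, coroot_eq_single_sub_single_s18]
  exact comp_swap_eq_sub_smul_single i.castSucc i.succ x

theorem act_simpleRefl_add_smul_coroot (i : Fin ℓ) (c : ℝ) (x : Fin (ℓ + 1) → ℝ) :
    act ℓ (simpleRefl ℓ i) x + c • coroot ℓ i
      = affinePreReflection (coroot ℓ i) (simpleRoot i) c x := by
  rw [act_simpleRefl_eq_preReflection, affinePreReflection]

theorem simpleRoot_coroot (i k : Fin ℓ) : simpleRoot i (coroot ℓ k) = cartan ℓ i k := by
  simp only [simpleRoot_apply, coroot, cartan, Fin.val_castSucc, Fin.val_succ, Fin.ext_iff]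
  split_ifs <;> first | omega | norm_num

theorem cartan_eq_zero_of_succ_lt {i k : Fin ℓ} (h : (i : ℕ) + 1 < k) : cartan ℓ i k = 0 := by
  have ne : i ≠ k := Fin.ne_of_val_ne (by omega)
  have not_adjacent : ¬((i : ℕ) + 1 = k ∨ (k : ℕ) + 1 = i) := by omega
  rw [cartan, if_neg ne, if_neg not_adjacent]

theorem simpleRoot_Jmap (i : Fin ℓ) (x : Fin (ℓ + 1) → ℝ) :
    simpleRoot i (Jmap ℓ x) = simpleRoot i.rev x := by
  simp only [simpleRoot_apply, Jmap, Fin.rev_castSucc, Fin.rev_succ]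
  ring

theorem affinePreReflection_affinePreReflection_rev_sub_self {i : Fin ℓ}
    (hi : cartan ℓ i i.rev = 0) (c : ℝ) {x : Fin (ℓ + 1) → ℝ} (hx : Jmap ℓ x = x) :
    affinePreReflection (coroot ℓ i) (simpleRoot i) c
        (affinePreReflection (coroot ℓ i.rev) (simpleRoot i.rev) c x) - x
      = (c - simpleRoot i x) • (coroot ℓ i + coroot ℓ i.rev) := by
  have root_coroot_rev : simpleRoot i (coroot ℓ i.rev) = 0 := (simpleRoot_coroot i i.rev).trans hi
  have same_root_value : simpleRoot i.rev x = simpleRoot i x := by rw [← simpleRoot_Jmap, hx]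
  rw [affinePreReflection_affinePreReflection_sub_self root_coroot_rev, same_root_value, smul_add]

end TypeA

end MV

/-- for `1 ≤ j ≤ n-1`, the composed affine reflections
`σ(h) = s_j·h + c h_j`, `τ(h) = s_{ℓ+1-j}·h + c h_{ℓ+1-j}` satisfy on `J`-fixed `x ∈ V`:
`σ(τ(x)) - x = (c - (x_j - x_{j+1})) · (h_j + h_{ℓ+1-j})`. -/
theorem stmt18 (ℓ n : ℕ) (hn : 2 ≤ n) (hln : ℓ = 2 * n - 1 ∨ ℓ = 2 * n)
    (j : ℕ) (hj1 : 1 ≤ j) (hj2 : j ≤ n - 1) (c : ℝ)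
    (x : Fin (ℓ+1) → ℝ) (hx : x ∈ Vsub ℓ) (hfix : Jmap ℓ x = x) :
    (act ℓ (simpleRefl ℓ ⟨j - 1, by omega⟩)
        (act ℓ (simpleRefl ℓ ⟨ℓ - j, by omega⟩) x + c • coroot ℓ ⟨ℓ - j, by omega⟩)
      + c • coroot ℓ ⟨j - 1, by omega⟩) - x
    = (c - (x ⟨j - 1, by omega⟩ - x ⟨j, by omega⟩))
        • (coroot ℓ ⟨j - 1, by omega⟩ + coroot ℓ ⟨ℓ - j, by omega⟩) := by
  obtain ⟨i, rfl⟩ := Nat.exists_eq_add_of_le' hj1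
  have hi : i < ℓ := by omega
  have cartan_rev : cartan ℓ ⟨i, hi⟩ (Fin.rev ⟨i, hi⟩) = 0 :=
    cartan_eq_zero_of_succ_lt (by simp only [Fin.val_rev]; omega)
  rw [act_simpleRefl_add_smul_coroot, act_simpleRefl_add_smul_coroot]
  -- With `j = i + 1`, the 0-based node `ℓ - j` is definitionally `Fin.rev` of the node `i`.
  exact affinePreReflection_affinePreReflection_rev_sub_self cartan_rev c hfix
end
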